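/- Let T = (S,2^S,κ,AP,L) be a labelled denumerable Markov chain (S countable) admitting a finite attractor, let M = (Q,q₀,E,𝓕) be a deterministic Muller automaton over AP, and let B be a finite attractor of the product T ⋉ M. Then for every initial probability measure μ on S, Prob^{T⋉M}_{μ ⊗ δ_{q₀}}({ρ | Inf(ρ) ∈ 𝓕}) = Σ_{C} Prob^{T⋉M}_{μ ⊗ δ_{q₀}}(F C), where the sum ranges over the BSCCs C of Graph(B) that are good for 𝓕 (i.e. F_C ∈ 𝓕). -/

import Mathlib

open MeasureTheory ProbabilityTheory ENNReal Filter Topology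

namespace STS

variable {S : Type*} [MeasurableSpace S]

/-- Probability of the cylinder `Cyl(A 0, …, A n)` for the Markov chain with kernel `κ`
and initial distribution `μ`. -/
noncomputable def cylProb (κ : Kernel S S) : ℕ → Measure S → (ℕ → Set S) → ℝ≥0∞
  | 0, μ, A => μ (A 0)
  | n + 1, μ, A => ∫⁻ s in A 0, cylProb κ n (κ s) (fun i => A (i + 1)) ∂μ

/-- `P` assigns to each initial (probability) distribution the path measure (on `ℕ → S`,
with the product σ-algebra) of the time-homogeneous Markov chain with transition kernel `κ`,
as given by the Ionescu–Tulcea construction: it is the unique probability measure giving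
cylinders their prescribed probabilities. -/
def IsPathMeasure (κ : Kernel S S) (P : Measure S → Measure (ℕ → S)) : Prop :=
  ∀ μ : Measure S, IsProbabilityMeasure μ →
    IsProbabilityMeasure (P μ) ∧
    ∀ (n : ℕ) (A : ℕ → Set S), (∀ i, MeasurableSet (A i)) →
      P μ {ρ | ∀ i ≤ n, ρ i ∈ A i} = cylProb κ n μ A

/-- The path event `F B`: eventually reach `B`. -/
def evF (B : Set S) : Set (ℕ → S) := {ρ | ∃ k, ρ k ∈ B}

/-- The path event `F≤n B`. -/
def evFle (n : ℕ) (B : Set S) : Set (ℕ → S) := {ρ | ∃ k ≤ n, ρ k ∈ B}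

/-- The path event `F≥p B`. -/
def evFge (p : ℕ) (B : Set S) : Set (ℕ → S) := {ρ | ∃ k, p ≤ k ∧ ρ k ∈ B}

/-- The path event `GF B`: visit `B` infinitely often. -/
def evGF (B : Set S) : Set (ℕ → S) := {ρ | ∀ n, ∃ k, n ≤ k ∧ ρ k ∈ B}

/-- The path event `FG B`: eventually stay in `B` forever. -/
def evFG (B : Set S) : Set (ℕ → S) := {ρ | ∃ n, ∀ k, n ≤ k → ρ k ∈ B}

/-- The until event `B' U B`. -/
def evU (B' B : Set S) : Set (ℕ → S) := {ρ | ∃ k, ρ k ∈ B ∧ ∀ j < k, ρ j ∈ B'}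

/-- The bounded until event `B' U≤n B`. -/
def evUle (n : ℕ) (B' B : Set S) : Set (ℕ → S) := {ρ | ∃ k ≤ n, ρ k ∈ B ∧ ∀ j < k, ρ j ∈ B'}

/-- The avoid-set `B̃` of `B`: states from which `B` is reached with probability `0`. -/
def avoid (P : Measure S → Measure (ℕ → S)) (B : Set S) : Set S :=
  {s | P (Measure.dirac s) (evF B) = 0}

/-- `T` is decisive w.r.t. `B` from `μ`. -/
def Decisive (P : Measure S → Measure (ℕ → S)) (μ : Measure S) (B : Set S) : Prop :=
  P μ (evF B ∪ evF (avoid P B)) = 1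

/-- `T` is strongly decisive w.r.t. `B` from `μ`. -/
def StronglyDecisive (P : Measure S → Measure (ℕ → S)) (μ : Measure S) (B : Set S) : Prop :=
  P μ (evGF B ∪ evF (avoid P B)) = 1

/-- `T` is persistently decisive w.r.t. `B` from `μ`. -/
def PersistentlyDecisive (P : Measure S → Measure (ℕ → S)) (μ : Measure S) (B : Set S) : Prop :=
  ∀ p : ℕ, P μ (evFge p B ∪ evFge p (avoid P B)) = 1

/-- `PreProb(B)`: measurable sets `B'` from which `B` is reached in one step with positive
probability, whatever the initial distribution concentrated on `B'`. -/
def PreProb (P : Measure S → Measure (ℕ → S)) (B : Set S) : Set (Set S) :=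
  {B' | MeasurableSet B' ∧ ∀ μ' : Measure S, IsProbabilityMeasure μ' → μ' B' = 1 →
    0 < P μ' {ρ | ρ 0 ∈ B' ∧ ρ 1 ∈ B}}

/-- `T` is fair w.r.t. `B` from `μ`. -/
def Fair (P : Measure S → Measure (ℕ → S)) (μ : Measure S) (B : Set S) : Prop :=
  ∀ B' ∈ PreProb P B, 0 < P μ (evGF B') →
    P μ (evGF B ∩ evGF B') = P μ (evGF B')

/-- The one-step measure transformer `Ω_T`. -/
noncomputable def Omega (κ : Kernel S S) (μ : Measure S) : Measure S :=
  μ.bind (fun s => κ s)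

/-- Two measures are qualitatively equivalent if they have the same null (measurable) sets. -/
def QualEquiv {T : Type*} [MeasurableSpace T] (μ ν : Measure T) : Prop :=
  ∀ A : Set T, MeasurableSet A → (μ A = 0 ↔ ν A = 0)

/-- `T₂ = (S₂,κ₂)` is an `α`-abstraction of `T₁ = (S₁,κ₁)`. -/
def IsAbstraction {S₁ S₂ : Type*} [MeasurableSpace S₁] [MeasurableSpace S₂]
    (κ₁ : Kernel S₁ S₁) (κ₂ : Kernel S₂ S₂) (α : S₁ → S₂) : Prop :=
  ∀ μ : Measure S₁, IsProbabilityMeasure μ →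
    QualEquiv (Measure.map α (Omega κ₁ μ)) (Omega κ₂ (Measure.map α μ))


/-- One-step positive-probability relation `x → y` in a denumerable Markov chain. -/
def step {X : Type*} [MeasurableSpace X] (κ : Kernel X X) (x y : X) : Prop :=
  0 < κ x {y}

/-- `C` is a bottom strongly connected component (BSCC) of the graph `Graph(B)` whose
vertices are the elements of `B` and whose edges are given by `x →⁺ y` (existence of a
path in the chain): `C ⊆ B` is nonempty, strongly connected, and no edge leaves it. -/
def IsBSCC {X : Type*} [MeasurableSpace X] (κ : Kernel X X) (B C : Set X) : Prop :=
  C ⊆ B ∧ C.Nonempty ∧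
    (∀ x ∈ C, ∀ y ∈ C, Relation.TransGen (step κ) x y) ∧
    (∀ x ∈ C, ∀ y ∈ B, Relation.TransGen (step κ) x y → y ∈ C)

/-- `F_C`: the set of automaton locations reachable (by a path in the product chain)
from the BSCC `C`. -/
def FC {S Q : Type*} [MeasurableSpace (S × Q)] (κ : Kernel (S × Q) (S × Q))
    (C : Set (S × Q)) : Set Q :=
  {q | ∃ s : S, ∃ x ∈ C, Relation.ReflTransGen (step κ) x (s, q)}

/-- `Inf(ρ)`: the set of automaton locations visited infinitely often along `ρ`. -/
def InfQ {S Q : Type*} (ρ : ℕ → S × Q) : Set Q :=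
  {q | ∀ n, ∃ k, n ≤ k ∧ (ρ k).2 = q}

/-!
Almost every path takes only steps of positive probability. It visits `B` infinitely often, because
the law of the shifted path is again a path measure and `B` is an attractor for every initial law.
By Lévy's conditional Borel–Cantelli lemma, whenever `x → y` and the path visits `x` infinitely
often, it also visits `y` infinitely often. On such a path, let `C` be the set of elements of `B`
visited infinitely often. It is nonempty because `B` is finite, and for `x ∈ C` the states visited
infinitely often are exactly those with `x →⁺ y`. So `C` is a BSCC, it is the only BSCC the path
meets, and `Inf(ρ) = F_C`. Hence `Inf(ρ) ∈ 𝓕` is, up to a null set, the almost disjoint union of the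
events `F C` over the good BSCCs.
-/

section PathMeasure

open Preorder

lemma measurableSet_evF {B : Set S} (hB : MeasurableSet B) : MeasurableSet (evF B) := by
  have : evF B = ⋃ k, (fun ρ : ℕ → S => ρ k) ⁻¹' B := by
    ext ρ
    simp only [evF, Set.mem_ofPred_eq, Set.mem_iUnion, Set.mem_preimage]
  rw [this]
  exact .iUnion fun k => measurable_pi_apply k hB

lemma mem_evGF_iff_frequently {X : Type*} {B : Set X} {ρ : ℕ → X} :
    ρ ∈ evGF B ↔ ∃ᶠ k in atTop, ρ k ∈ B :=
  frequently_atTop.symm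

lemma mem_evGF_iff_mem_limsup {X : Type*} {B : Set X} {ρ : ℕ → X} :
    ρ ∈ evGF B ↔ ρ ∈ limsup (fun k => {ρ : ℕ → X | ρ k ∈ B}) atTop := by
  rw [mem_evGF_iff_frequently, mem_limsup_iff_frequently_mem]
  rfl

lemma measurableSet_cylinder (n : ℕ) {A : ℕ → Set S} (hA : ∀ i, MeasurableSet (A i)) :
    MeasurableSet {ρ : ℕ → S | ∀ i ≤ n, ρ i ∈ A i} :=
  .pi (Set.to_countable (Set.Iic n)) fun i _ => hA i

lemma map_frestrictLe_eq_of_cylinder {m₁ m₂ : Measure (ℕ → S)} [IsFiniteMeasure m₁] {n : ℕ}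
    (h : ∀ A : ℕ → Set S, (∀ i, MeasurableSet (A i)) →
      m₁ {ρ | ∀ i ≤ n, ρ i ∈ A i} = m₂ {ρ | ∀ i ≤ n, ρ i ∈ A i}) :
    m₁.map (frestrictLe (π := fun _ => S) n) = m₂.map (frestrictLe (π := fun _ => S) n) := by
  have hf : Measurable (frestrictLe (π := fun _ => S) n) := measurable_frestrictLe n
  refine ext_of_generate_finite _ generateFrom_pi.symm isPiSystem_pi ?_ ?_
  · rintro _ ⟨t, ht, rfl⟩
    replace ht : ∀ i, MeasurableSet (t i) := fun i => ht i (Set.mem_univ i)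
    let A : ℕ → Set S := fun i => if hi : i ∈ Finset.Iic n then t ⟨i, hi⟩ else Set.univ
    have hA : ∀ i, MeasurableSet (A i) := fun i => by
      by_cases hi : i ∈ Finset.Iic n
      · simpa only [A, hi, dite_true] using ht ⟨i, hi⟩
      · simp only [A, hi, dite_false, MeasurableSet.univ]
    have hpre : frestrictLe n ⁻¹' Set.univ.pi t = {ρ : ℕ → S | ∀ i ≤ n, ρ i ∈ A i} := by
      ext ρ
      simp +contextual [A]
    have htm : MeasurableSet (Set.univ.pi t) := .univ_pi ht
    rw [Measure.map_apply hf htm, Measure.map_apply hf htm, hpre, h A hA]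
  · simpa [Measure.map_apply hf .univ] using h (fun _ => Set.univ) fun _ => .univ

lemma measure_eq_of_cylinder {m₁ m₂ : Measure (ℕ → S)} [IsFiniteMeasure m₁]
    (h : ∀ (n : ℕ) (A : ℕ → Set S), (∀ i, MeasurableSet (A i)) →
      m₁ {ρ | ∀ i ≤ n, ρ i ∈ A i} = m₂ {ρ | ∀ i ≤ n, ρ i ∈ A i}) : m₁ = m₂ := by
  have hfamily : IsProjectiveMeasureFamily fun I : Finset ℕ => m₁.map I.restrict :=
    isProjectiveMeasureFamily_map_restrict (X := fun i (ρ : ℕ → S) => ρ i)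
      fun i => (measurable_pi_apply i).aemeasurable
  have hlimit : IsProjectiveLimit m₁ fun I : Finset ℕ => m₁.map I.restrict := fun _ => rfl
  exact hlimit.unique ((isProjectiveLimit_nat_iff hfamily m₂).2
    fun n => (map_frestrictLe_eq_of_cylinder (h n)).symm)

lemma measurableSet_piLE_mem {n k : ℕ} (hk : k ≤ n) {B : Set S} (hB : MeasurableSet B) :
    MeasurableSet[Filtration.piLE (X := fun _ : ℕ => S) n] {ρ : ℕ → S | ρ k ∈ B} :=
  ⟨(fun a : Set.Iic n → S => a ⟨k, hk⟩) ⁻¹' B, measurable_pi_apply _ hB, rfl⟩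

lemma measurable_cylProb (κ : Kernel S S) [IsSFiniteKernel κ] (n : ℕ) {A : ℕ → Set S}
    (hA : ∀ i, MeasurableSet (A i)) : Measurable fun s => cylProb κ n (κ s) A := by
  induction n generalizing A with
  | zero => exact κ.measurable_coe (hA 0)
  | succ n ih => exact (ih fun i => hA (i + 1)).setLIntegral_kernel (hA 0)

lemma cylProb_bind (κ : Kernel S S) [IsSFiniteKernel κ] (μ : Measure S) (n : ℕ) {A : ℕ → Set S}
    (hA : ∀ i, MeasurableSet (A i)) :
    cylProb κ n (μ.bind κ) A = ∫⁻ s, cylProb κ n (κ s) A ∂μ := by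
  cases n with
  | zero => exact Measure.bind_apply (hA 0) κ.aemeasurable
  | succ n =>
    have hm := measurable_cylProb κ n fun i => hA (i + 1)
    simp only [cylProb]
    rw [← lintegral_indicator (hA 0), Measure.lintegral_bind κ.aemeasurable
      (hm.indicator (hA 0)).aemeasurable]
    simp only [lintegral_indicator (hA 0)]

lemma cylProb_succ_of_subset_singleton (κ : Kernel S S) [IsSFiniteKernel κ] (μ : Measure S)
    {n : ℕ} {A : ℕ → Set S} (hA : ∀ i, MeasurableSet (A i)) {x : S} (hx : A n ⊆ {x}) :
    cylProb κ (n + 1) μ A = κ x (A (n + 1)) * cylProb κ n μ A := by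
  induction n generalizing μ A with
  | zero =>
    calc ∫⁻ s in A 0, κ s (A 1) ∂μ = ∫⁻ _ in A 0, κ x (A 1) ∂μ :=
          setLIntegral_congr_fun (hA 0) fun s hs => by rw [hx hs]
      _ = κ x (A 1) * μ (A 0) := setLIntegral_const _ _
  | succ n ih =>
    have hA' : ∀ i, MeasurableSet (A (i + 1)) := fun i => hA (i + 1)
    calc ∫⁻ s in A 0, cylProb κ (n + 1) (κ s) (fun i => A (i + 1)) ∂μ
        = ∫⁻ s in A 0, κ x (A (n + 2)) * cylProb κ n (κ s) (fun i => A (i + 1)) ∂μ := by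
          simp only [ih (κ _) hA' hx]
      _ = κ x (A (n + 2)) * cylProb κ (n + 1) μ A :=
          lintegral_const_mul _ (measurable_cylProb κ n hA')

namespace IsPathMeasure

variable {κ : Kernel S S} {P : Measure S → Measure (ℕ → S)}

lemma map_shift [IsMarkovKernel κ] (hP : IsPathMeasure κ P) (μ : Measure S)
    [IsProbabilityMeasure μ] :
    (P μ).map (fun ρ n => ρ (n + 1)) = P (μ.bind κ) := by
  obtain ⟨hprob, hcyl⟩ := hP μ inferInstance
  have hshift : Measurable fun (ρ : ℕ → S) n => ρ (n + 1) := by fun_prop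
  refine measure_eq_of_cylinder fun n A hA => ?_
  let A' : ℕ → Set S := fun | 0 => Set.univ | i + 1 => A i
  have hA' : ∀ i, MeasurableSet (A' i) := fun | 0 => .univ | i + 1 => hA i
  have hpre : (fun (ρ : ℕ → S) n => ρ (n + 1)) ⁻¹' {ρ | ∀ i ≤ n, ρ i ∈ A i} =
      {ρ | ∀ i ≤ n + 1, ρ i ∈ A' i} := by
    ext ρ
    refine ⟨fun h i hi => ?_, fun h i hi => h (i + 1) (by lia)⟩
    cases i with
    | zero => trivial
    | succ i => exact h i (by lia)
  rw [Measure.map_apply hshift (measurableSet_cylinder n hA), hpre, hcyl _ _ hA',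
    (hP (μ.bind κ) inferInstance).2 _ _ hA, cylProb_bind κ μ n hA]
  exact setLIntegral_univ _

lemma ae_mem_evGF [IsMarkovKernel κ] (hP : IsPathMeasure κ P) {B : Set S} (hB : MeasurableSet B)
    (hattr : ∀ ν : Measure S, IsProbabilityMeasure ν → P ν (evF B) = 1)
    (μ : Measure S) [IsProbabilityMeasure μ] : ∀ᵐ ρ ∂P μ, ρ ∈ evGF B := by
  refine ae_all_iff.2 fun n => ?_
  induction n generalizing μ with
  | zero =>
    have := (hP μ inferInstance).1
    filter_upwards [(mem_ae_iff_prob_eq_one (measurableSet_evF hB)).2 (hattr μ inferInstance)]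
      with ρ ⟨k, hk⟩
    exact ⟨k, k.zero_le, hk⟩
  | succ n ih =>
    have hshift : Measurable fun (ρ : ℕ → S) n => ρ (n + 1) := by fun_prop
    have hae := ih (μ.bind κ)
    rw [← hP.map_shift μ] at hae
    filter_upwards [ae_of_ae_map hshift.aemeasurable hae] with ρ ⟨k, hk, hkB⟩
    exact ⟨k + 1, by lia, hkB⟩

lemma measure_cylinder_inter_succ_mem [IsSFiniteKernel κ] [MeasurableSingletonClass S]
    (hP : IsPathMeasure κ P) (μ : Measure S) [IsProbabilityMeasure μ] (n : ℕ) (x : S) {C : Set S}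
    (hC : MeasurableSet C) {A : ℕ → Set S} (hA : ∀ i, MeasurableSet (A i)) :
    P μ ({ρ | ∀ i ≤ n, ρ i ∈ A i} ∩ {ρ | ρ n = x ∧ ρ (n + 1) ∈ C}) =
      κ x C * P μ ({ρ | ∀ i ≤ n, ρ i ∈ A i} ∩ {ρ | ρ n = x}) := by
  let A' : ℕ → Set S := fun i => if i < n then A i else if i = n then A i ∩ {x} else C
  have hA' : ∀ i, MeasurableSet (A' i) := fun i => by
    have := (hA i).inter (measurableSet_singleton x)
    grind
  have hlt : ∀ i < n, A' i = A i := fun i hi => if_pos hi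
  have hn : A' n = A n ∩ {x} := by simp [A']
  have hsucc : A' (n + 1) = C := by simp [A']
  have hcyl : {ρ | ∀ i ≤ n, ρ i ∈ A i} ∩ {ρ | ρ n = x} = {ρ : ℕ → S | ∀ i ≤ n, ρ i ∈ A' i} := by
    ext ρ
    simp only [Set.mem_inter_iff, Set.mem_ofPred_eq, Nat.le_iff_lt_or_eq, or_imp, forall_and,
      forall_eq, hn, Set.mem_singleton_iff, and_assoc]
    exact and_congr_left fun _ => forall₂_congr fun i hi => by rw [hlt i hi]
  have hcyl_succ : {ρ | ∀ i ≤ n, ρ i ∈ A i} ∩ {ρ | ρ n = x ∧ ρ (n + 1) ∈ C} =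
      {ρ : ℕ → S | ∀ i ≤ n + 1, ρ i ∈ A' i} := by
    ext ρ
    have hiff := Set.ext_iff.1 hcyl ρ
    simp only [Set.mem_inter_iff, Set.mem_ofPred_eq] at hiff ⊢
    simp only [← and_assoc, hiff, Nat.le_succ_iff, or_imp, forall_and, forall_eq, hsucc]
  have hcylProb := (hP μ inferInstance).2
  rw [hcyl, hcyl_succ, hcylProb n A' hA', hcylProb (n + 1) A' hA',
    cylProb_succ_of_subset_singleton κ μ hA' (hn.trans_subset Set.inter_subset_right), hsucc]

lemma measure_inter_succ_mem [IsSFiniteKernel κ] [MeasurableSingletonClass S]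
    (hP : IsPathMeasure κ P) (μ : Measure S) [IsProbabilityMeasure μ] (n : ℕ) (x : S) {C : Set S}
    (hC : MeasurableSet C) {D : Set (ℕ → S)}
    (hD : MeasurableSet[Filtration.piLE (X := fun _ : ℕ => S) n] D) :
    P μ (D ∩ {ρ | ρ n = x ∧ ρ (n + 1) ∈ C}) = κ x C * P μ (D ∩ {ρ | ρ n = x}) := by
  have := (hP μ inferInstance).1
  have hf : Measurable (frestrictLe (π := fun _ => S) n) := measurable_frestrictLe n
  rw [Filtration.piLE_eq_comap_frestrictLe] at hD
  obtain ⟨T, hT, rfl⟩ := hD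
  have hmap : ((P μ).restrict {ρ | ρ n = x ∧ ρ (n + 1) ∈ C}).map (frestrictLe n) =
      (κ x C • (P μ).restrict {ρ | ρ n = x}).map (frestrictLe n) := by
    refine map_frestrictLe_eq_of_cylinder fun A hA => ?_
    have hcyl := measurableSet_cylinder n hA
    rw [Measure.smul_apply, Measure.restrict_apply hcyl, Measure.restrict_apply hcyl, smul_eq_mul]
    exact hP.measure_cylinder_inter_succ_mem μ n x hC hA
  have happly := congrArg (fun m => m T) hmap
  simpa only [Measure.map_apply hf hT, Measure.smul_apply, Measure.restrict_apply (hf hT),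
    smul_eq_mul] using happly

lemma ae_step [Countable S] [MeasurableSingletonClass S] [IsSFiniteKernel κ]
    (hP : IsPathMeasure κ P) (μ : Measure S) [IsProbabilityMeasure μ] :
    ∀ᵐ ρ ∂P μ, ∀ n, step κ (ρ n) (ρ (n + 1)) := by
  have hnull : ∀ᵐ ρ ∂P μ, ∀ n x y, κ x {y} = 0 → ¬ (ρ n = x ∧ ρ (n + 1) = y) := by
    simp only [ae_all_iff]
    intro n x y hxy
    have hstep := hP.measure_inter_succ_mem μ n x (measurableSet_singleton y) (D := Set.univ) .univ
    rw [hxy, zero_mul, Set.univ_inter] at hstep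
    exact measure_eq_zero_iff_ae_notMem.1 hstep
  filter_upwards [hnull] with ρ hρ n
  exact pos_iff_ne_zero.2 fun h => hρ n _ _ h ⟨rfl, rfl⟩

lemma indicator_ae_eq_condExp_succ_mem [IsFiniteKernel κ] [MeasurableSingletonClass S]
    (hP : IsPathMeasure κ P) (μ : Measure S) [IsProbabilityMeasure μ] (n : ℕ) (x : S) {C : Set S}
    (hC : MeasurableSet C) :
    {ρ : ℕ → S | ρ n = x}.indicator (fun _ => (κ x).real C) =ᵐ[P μ]
      (P μ)[{ρ : ℕ → S | ρ n = x ∧ ρ (n + 1) ∈ C}.indicator (1 : (ℕ → S) → ℝ) |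
        Filtration.piLE (X := fun _ : ℕ => S) n] := by
  have := (hP μ inferInstance).1
  have hx : MeasurableSet[Filtration.piLE (X := fun _ : ℕ => S) n] {ρ : ℕ → S | ρ n = x} :=
    measurableSet_piLE_mem le_rfl (measurableSet_singleton x)
  have hx' : MeasurableSet {ρ : ℕ → S | ρ n = x} := Filtration.le _ n _ hx
  have hxC : MeasurableSet {ρ : ℕ → S | ρ n = x ∧ ρ (n + 1) ∈ C} :=
    hx'.inter (measurable_pi_apply (n + 1) hC)
  refine ae_eq_condExp_of_forall_setIntegral_eq (Filtration.le _ n)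
    ((integrable_const 1).indicator hxC)
    (fun _ _ _ => ((integrable_const _).indicator hx').integrableOn) (fun D hD _ => ?_)
    (stronglyMeasurable_const.indicator hx).aestronglyMeasurable
  calc ∫ ρ in D, {ρ : ℕ → S | ρ n = x}.indicator (fun _ => (κ x).real C) ρ ∂P μ
      = (P μ).real (D ∩ {ρ | ρ n = x}) * (κ x).real C := by
        rw [setIntegral_indicator hx', setIntegral_const, smul_eq_mul]
    _ = (P μ).real (D ∩ {ρ | ρ n = x ∧ ρ (n + 1) ∈ C}) := by
        simp only [measureReal_def]
        rw [hP.measure_inter_succ_mem μ n x hC hD, ENNReal.toReal_mul, mul_comm]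
    _ = ∫ ρ in D, {ρ : ℕ → S | ρ n = x ∧ ρ (n + 1) ∈ C}.indicator 1 ρ ∂P μ := by
        simp only [setIntegral_indicator hxC, Pi.one_apply, setIntegral_const, smul_eq_mul, mul_one]

lemma ae_mem_evGF_of_mem_evGF_singleton [IsFiniteKernel κ] [MeasurableSingletonClass S]
    (hP : IsPathMeasure κ P) (μ : Measure S) [IsProbabilityMeasure μ] {x : S} {C : Set S}
    (hC : MeasurableSet C) (hxC : κ x C ≠ 0) : ∀ᵐ ρ ∂P μ, ρ ∈ evGF {x} → ρ ∈ evGF C := by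
  have := (hP μ inferInstance).1
  -- `s 0` is an artefact of truncated subtraction; Lévy's criterion only sees `s (n + 1)` for the
  -- conditional probabilities given the first `n` steps, and the limsup ignores `s 0`.
  let s : ℕ → Set (ℕ → S) := fun n => {ρ | ρ (n - 1) = x ∧ ρ n ∈ C}
  have hs : ∀ n, MeasurableSet[Filtration.piLE (X := fun _ : ℕ => S) n] (s n) := fun n =>
    (measurableSet_piLE_mem n.pred_le (measurableSet_singleton x)).inter
      (measurableSet_piLE_mem le_rfl hC)
  have hpos : 0 < (κ x).real C := ENNReal.toReal_pos hxC (measure_ne_top _ _)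
  filter_upwards [ae_mem_limsup_atTop_iff (P μ) hs,
    ae_all_iff.2 fun n => hP.indicator_ae_eq_condExp_succ_mem μ n x hC] with ρ hlevy hcondExp hx
  have hsum : Tendsto (fun n => ∑ k ∈ Finset.range n,
      {ρ : ℕ → S | ρ k = x}.indicator (fun _ => (κ x).real C) ρ) atTop atTop := by
    rw [mem_evGF_iff_mem_limsup, Set.limsup_eq_tendsto_sum_indicator_atTop hpos] at hx
    exact hx
  simp only [hcondExp] at hsum
  have hlimsup : ρ ∈ limsup s atTop := hlevy.2 hsum
  rw [mem_limsup_iff_frequently_mem] at hlimsup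
  exact mem_evGF_iff_frequently.2 (hlimsup.mono fun k hk => hk.2)

end IsPathMeasure

end PathMeasure

section FairPath

variable {X : Type*} [MeasurableSpace X] {κ : Kernel X X} {B C : Set X} {ρ : ℕ → X} {x y : X}

/-- A path of the chain which is fair with respect to single steps: each of its steps has positive
probability, and each one-step successor of a state visited infinitely often is itself visited
infinitely often. This is a property of one path, unlike the measure-level notion `Fair`. -/
structure IsFairPath (κ : Kernel X X) (ρ : ℕ → X) : Prop where
  step_succ : ∀ n, step κ (ρ n) (ρ (n + 1))
  mem_evGF_of_step : ∀ x y, step κ x y → ρ ∈ evGF {x} → ρ ∈ evGF {y}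

/-- The states of `B` which the path `ρ` visits infinitely often. If there are any, and `ρ` is fair,
they form a BSCC of `Graph(B)`, the only one which `ρ` meets. -/
def limitSet (B : Set X) (ρ : ℕ → X) : Set X := {y ∈ B | ρ ∈ evGF {y}}

lemma limitSet_nonempty {X : Type*} {B : Set X} {ρ : ℕ → X} (hB : B.Finite) (hρ : ρ ∈ evGF B) :
    (limitSet B ρ).Nonempty := by
  have hfreq : ∃ᶠ k in atTop, ∃ y ∈ B, ρ k = y := by
    simpa only [exists_eq_right'] using mem_evGF_iff_frequently.1 hρ
  obtain ⟨y, hyB, hy⟩ := (frequently_exists_finite hB).1 hfreq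
  exact ⟨y, hyB, mem_evGF_iff_frequently.2 hy⟩

namespace IsFairPath

lemma transGen_step (hρ : IsFairPath κ ρ) {m n : ℕ} (hmn : m < n) :
    Relation.TransGen (step κ) (ρ m) (ρ n) :=
  Nat.rel_of_forall_rel_succ_of_lt (Relation.TransGen (step κ))
    (fun k => .single (hρ.step_succ k)) hmn

lemma mem_evGF_of_reflTransGen (hρ : IsFairPath κ ρ) (hxy : Relation.ReflTransGen (step κ) x y)
    (hx : ρ ∈ evGF {x}) : ρ ∈ evGF {y} := by
  induction hxy with
  | refl => exact hx
  | tail _ hstep ih => exact hρ.mem_evGF_of_step _ _ hstep ih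

lemma mem_evGF_singleton_iff (hρ : IsFairPath κ ρ) (hx : ρ ∈ evGF {x}) :
    ρ ∈ evGF {y} ↔ Relation.TransGen (step κ) x y := by
  refine ⟨fun hy => ?_, fun hxy => hρ.mem_evGF_of_reflTransGen hxy.to_reflTransGen hx⟩
  obtain ⟨m, -, rfl⟩ := hx 0
  obtain ⟨n, hmn, rfl⟩ := hy (m + 1)
  exact hρ.transGen_step hmn

lemma isBSCC_limitSet (hρ : IsFairPath κ ρ) (hne : (limitSet B ρ).Nonempty) :
    IsBSCC κ B (limitSet B ρ) :=
  ⟨fun _ hy => hy.1, hne, fun _ hx _ hy => (hρ.mem_evGF_singleton_iff hx.2).1 hy.2,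
    fun _ hx _ hyB hxy => ⟨hyB, (hρ.mem_evGF_singleton_iff hx.2).2 hxy⟩⟩

lemma mem_evF_iff_eq_limitSet (hρ : IsFairPath κ ρ) (hne : (limitSet B ρ).Nonempty)
    (hC : IsBSCC κ B C) : ρ ∈ evF C ↔ C = limitSet B ρ := by
  obtain ⟨hCB, -, hconn, hbot⟩ := hC
  obtain ⟨z, hzB, hz⟩ := hne
  constructor
  · rintro ⟨k, hk⟩
    have hzC : z ∈ C := by
      obtain ⟨n, hkn, rfl⟩ := hz (k + 1)
      exact hbot _ hk _ hzB (hρ.transGen_step hkn)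
    ext y
    exact ⟨fun hy => ⟨hCB hy, (hρ.mem_evGF_singleton_iff hz).2 (hconn z hzC y hy)⟩,
      fun hy => hbot z hzC y hy.1 ((hρ.mem_evGF_singleton_iff hz).1 hy.2)⟩
  · rintro rfl
    obtain ⟨k, -, rfl⟩ := hz 0
    exact ⟨k, hzB, hz⟩

lemma infQ_eq_FC_limitSet {S Q : Type*} [MeasurableSpace (S × Q)]
    {κ : Kernel (S × Q) (S × Q)} {B : Set (S × Q)} {ρ : ℕ → S × Q} (hρ : IsFairPath κ ρ)
    (hne : (limitSet B ρ).Nonempty) : InfQ ρ = FC κ (limitSet B ρ) := by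
  ext q
  constructor
  · intro hq
    obtain ⟨z, hzB, hz⟩ := hne
    obtain ⟨m, -, rfl⟩ := hz 0
    obtain ⟨n, hmn, rfl⟩ := hq (m + 1)
    exact ⟨(ρ n).1, ρ m, ⟨hzB, hz⟩, (hρ.transGen_step hmn).to_reflTransGen⟩
  · rintro ⟨s, x, ⟨-, hx⟩, hxs⟩ n
    obtain ⟨k, hnk, hk⟩ := hρ.mem_evGF_of_reflTransGen hxs hx n
    exact ⟨k, hnk, congrArg Prod.snd hk⟩

lemma infQ_mem_iff_exists_good_isBSCC {S Q : Type*} [MeasurableSpace (S × Q)]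
    {κ : Kernel (S × Q) (S × Q)} {B : Set (S × Q)} {ρ : ℕ → S × Q} (hρ : IsFairPath κ ρ)
    (hne : (limitSet B ρ).Nonempty) (𝓕 : Set (Set Q)) :
    InfQ ρ ∈ 𝓕 ↔ ∃ C, (IsBSCC κ B C ∧ FC κ C ∈ 𝓕) ∧ ρ ∈ evF C := by
  have hbscc := hρ.isBSCC_limitSet hne
  rw [hρ.infQ_eq_FC_limitSet hne]
  constructor
  · exact fun hgood => ⟨_, ⟨hbscc, hgood⟩, (hρ.mem_evF_iff_eq_limitSet hne hbscc).2 rfl⟩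
  · rintro ⟨C, ⟨hC, hgood⟩, hCρ⟩
    rwa [← (hρ.mem_evF_iff_eq_limitSet hne hC).1 hCρ]

end IsFairPath

lemma IsPathMeasure.ae_isFairPath [Countable X] [MeasurableSingletonClass X] [IsFiniteKernel κ]
    {P : Measure X → Measure (ℕ → X)} (hP : IsPathMeasure κ P) (μ : Measure X)
    [IsProbabilityMeasure μ] : ∀ᵐ ρ ∂P μ, IsFairPath κ ρ := by
  have hrec : ∀ᵐ ρ ∂P μ, ∀ x y, step κ x y → ρ ∈ evGF {x} → ρ ∈ evGF {y} := by
    simp only [ae_all_iff]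
    exact fun x y hxy =>
      hP.ae_mem_evGF_of_mem_evGF_singleton μ (measurableSet_singleton y) hxy.ne'
  filter_upwards [hP.ae_step μ, hrec] with ρ hstep hρ
  exact ⟨hstep, hρ⟩

end FairPath

theorem statement_16_general {S Q : Type*} [Countable (S × Q)] [MeasurableSpace (S × Q)]
    [MeasurableSingletonClass (S × Q)] {κ : Kernel (S × Q) (S × Q)} [IsMarkovKernel κ]
    {P : Measure (S × Q) → Measure (ℕ → S × Q)} (hP : IsPathMeasure κ P) (𝓕 : Set (Set Q))
    {B : Set (S × Q)} (hBfin : B.Finite)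
    (hBattr : ∀ ν : Measure (S × Q), IsProbabilityMeasure ν → P ν (evF B) = 1)
    (ν : Measure (S × Q)) [IsProbabilityMeasure ν] :
    P ν {ρ | InfQ ρ ∈ 𝓕} =
      ∑' C : {C : Set (S × Q) // IsBSCC κ B C ∧ FC κ C ∈ 𝓕}, P ν (evF (C : Set (S × Q))) := by
  have hlimit : ∀ᵐ ρ ∂P ν, IsFairPath κ ρ ∧ (limitSet B ρ).Nonempty :=
    (hP.ae_isFairPath ν).and
      ((hP.ae_mem_evGF hBfin.measurableSet hBattr ν).mono fun _ => limitSet_nonempty hBfin)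
  have hcount : Countable {C : Set (S × Q) // IsBSCC κ B C ∧ FC κ C ∈ 𝓕} :=
    (hBfin.finite_subsets.subset fun _ hC => hC.1.1).countable
  have hunion : {ρ | InfQ ρ ∈ 𝓕} =ᵐ[P ν]
      ⋃ C : {C : Set (S × Q) // IsBSCC κ B C ∧ FC κ C ∈ 𝓕}, evF (C : Set (S × Q)) := by
    filter_upwards [hlimit] with ρ ⟨hρ, hne⟩
    refine propext ((hρ.infQ_mem_iff_exists_good_isBSCC hne 𝓕).trans ?_)
    exact ⟨fun ⟨C, hC, hCρ⟩ => Set.mem_iUnion.2 ⟨⟨C, hC⟩, hCρ⟩,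
      fun h => let ⟨C, hC⟩ := Set.mem_iUnion.1 h; ⟨C, C.2, hC⟩⟩
  rw [measure_congr hunion, measure_iUnion₀ ?_
    fun C => (measurableSet_evF C.1.to_countable.measurableSet).nullMeasurableSet]
  intro C D hCD
  refine measure_eq_zero_iff_ae_notMem.2 ?_
  filter_upwards [hlimit] with ρ ⟨hρ, hne⟩ ⟨hC, hD⟩
  exact hCD (Subtype.ext (((hρ.mem_evF_iff_eq_limitSet hne C.2.1).1 hC).trans
    ((hρ.mem_evF_iff_eq_limitSet hne D.2.1).1 hD).symm))

/-- for a labelled denumerable Markov chain `T` with a finite attractor and a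
deterministic Muller automaton `M = (Q, q₀, E, 𝓕)`, if `B` is a finite attractor of the
product `T ⋉ M`, then for every initial probability measure `μ`, the probability that
`Inf(ρ) ∈ 𝓕` equals the sum, over the BSCCs `C` of `Graph(B)` that are good for `𝓕`
(i.e. `F_C ∈ 𝓕`), of the probability of reaching `C`. -/
theorem statement_16 {S : Type*} [MeasurableSpace S] [Countable S] [MeasurableSingletonClass S]
    {AP : Type*} [Finite AP]
    {Q : Type*} [Finite Q] [MeasurableSpace Q] [MeasurableSingletonClass Q]
    -- the labelled DMC `T = (S, 2^S, κ, AP, L)` with path measures `P`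
    (κ : Kernel S S) [IsMarkovKernel κ]
    (P : Measure S → Measure (ℕ → S)) (hP : IsPathMeasure κ P)
    (L : S → Set AP)
    -- the deterministic Muller automaton `M = (Q, q₀, E, 𝓕)`
    (q₀ : Q) (E : Set (Q × Set AP × Q)) (𝓕 : Set (Set Q))
    (hdet : ∀ q u q₁ q₂, (q, u, q₁) ∈ E → (q, u, q₂) ∈ E → q₁ = q₂)
    (hcomp : ∀ q u, ∃ q', (q, u, q') ∈ E)
    -- the product DMC `T ⋉ M` on `S × Q`, with path measures `P'`
    (κ' : Kernel (S × Q) (S × Q)) [IsMarkovKernel κ']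
    (hκ'mem : ∀ (s : S) (q : Q) (s' : S) (q' : Q),
      (q, L s, q') ∈ E → κ' (s, q) {(s', q')} = κ s {s'})
    (hκ'nmem : ∀ (s : S) (q : Q) (s' : S) (q' : Q),
      (q, L s, q') ∉ E → κ' (s, q) {(s', q')} = 0)
    (P' : Measure (S × Q) → Measure (ℕ → S × Q)) (hP' : IsPathMeasure κ' P')
    -- `T` admits a finite attractor
    (hTattr : ∃ A : Set S, A.Finite ∧
      ∀ μ : Measure S, IsProbabilityMeasure μ → P μ (evF A) = 1)
    -- `B` is a finite attractor of the product `T ⋉ M`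
    (B : Set (S × Q)) (hBfin : B.Finite)
    (hBattr : ∀ ν : Measure (S × Q), IsProbabilityMeasure ν → P' ν (evF B) = 1) :
    ∀ μ : Measure S, IsProbabilityMeasure μ →
      P' (μ.prod (Measure.dirac q₀)) {ρ : ℕ → S × Q | InfQ ρ ∈ 𝓕} =
        ∑' C : {C : Set (S × Q) // IsBSCC κ' B C ∧ FC κ' C ∈ 𝓕},
          P' (μ.prod (Measure.dirac q₀)) (evF (C : Set (S × Q))) := fun μ _ =>
  statement_16_general hP' 𝓕 hBfin hBattr (μ.prod (Measure.dirac q₀))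

end STS
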